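/- arXiv:1507.03163 — 3 statements merged into one kernel-verified Lean document; each statement's English description precedes it below -/
import Mathlib

section
/- Let n ≥ 2, and in S_{2n} let ρ be the involution pairing 2k with 2k+1, C_ρ its centralizer, and β the 2n-cycle x ↦ x+1 (mod 2n). Then the set Y' = {σ ∈ S_{2n} : σ·ρ·σ⁻¹·ρ is a product of two disjoint n-cycles} is exactly the double coset C_ρ·β·C_ρ = {a·β·b : a, b ∈ C_ρ}. -/
/-- The fixed-point-free involution of `Fin (2n)` pairing `2k` with `2k+1`. -/
def rho (n : ℕ) : Equiv.Perm (Fin (2 * n)) :=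
  Function.Involutive.toPerm
    (fun x => ⟨if x.val % 2 = 0 then x.val + 1 else x.val - 1, by
      have := x.isLt; split_ifs with h <;> omega⟩)
    (by
      intro x
      have hx := x.isLt
      apply Fin.ext
      dsimp only
      split_ifs <;> omega)

/-!
Think of fixed-point-free involutions `t` and `r` as perfect matchings. Their union is a disjoint
union of even cycles, so it has a proper 2-colouring `p`, and `t * r` preserves the colours. The
involution `r` carries `t * r` on one colour class to its inverse on the other, so the cycle type of
`t * r` is twice that of its restriction to a class. Hence the cycle type determines this
restriction up to conjugacy, and a conjugation between the restrictions of `t * r` and `t' * r'`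
extends uniquely to one taking `(r, t)` to `(r', t')`. With `t = σ r σ⁻¹` and `r' = r` this says
that the cycle type of `σ r σ⁻¹ r` determines the double coset of `σ` modulo the centralizer of `r`.
For `r = ρ` and `σ = β` the colouring is parity, and on the even numbers `β ρ β⁻¹ ρ` is `x ↦ x + 2`.
-/

open Equiv Function

section Transport

variable {α β : Type*} [Fintype α] [DecidableEq α] [Fintype β] [DecidableEq β]
  {σ : Perm α} {τ : Perm β}

theorem cycleType_eq_of_semiconj (e : α ≃ β) (h : Semiconj e σ τ) :
    σ.cycleType = τ.cycleType := by
  let f : α ≃ {_y : β // True} := e.trans (Equiv.subtypeUnivEquiv fun _ ↦ trivial).symm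
  have hτ : σ.extendDomain f = τ := by
    ext y
    obtain ⟨x, rfl⟩ := e.surjective y
    exact (Perm.extendDomain_apply_image σ f x).trans (h x)
  rw [← hτ, Perm.cycleType_extendDomain]

theorem exists_semiconj_of_cycleType_eq (hcard : Fintype.card α = Fintype.card β)
    (h : σ.cycleType = τ.cycleType) : ∃ e : α ≃ β, Semiconj e σ τ := by
  let f : α ≃ β := Fintype.equivOfCardEq hcard
  have hf : Semiconj f σ (f.permCongr σ) := fun x ↦ by simp
  obtain ⟨c, hc⟩ := isConj_iff.1 <| Perm.isConj_of_cycleType_eq <|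
    (cycleType_eq_of_semiconj f hf).symm.trans h
  refine ⟨f.trans c, fun x ↦ ?_⟩
  simp [← hc]

theorem cycleType_eq_subtypePerm_add_subtypePerm {p : α → Prop} [DecidablePred p]
    (hp : ∀ x, p (σ x) ↔ p x) :
    σ.cycleType = (σ.subtypePerm hp).cycleType +
      (σ.subtypePerm (p := fun x ↦ ¬p x) fun x ↦ not_congr (hp x)).cycleType := by
  let u : Perm α := Perm.ofSubtype (σ.subtypePerm hp)
  let v : Perm α :=
    Perm.ofSubtype (σ.subtypePerm (p := fun x ↦ ¬p x) fun x ↦ not_congr (hp x))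
  have u_apply (x) : u x = if p x then σ x else x := by
    split_ifs with hx
    · exact Perm.ofSubtype_apply_of_mem _ hx
    · exact Perm.ofSubtype_apply_of_not_mem _ hx
  have v_apply (x) : v x = if p x then x else σ x := by
    split_ifs with hx
    · exact Perm.ofSubtype_apply_of_not_mem (p := fun x ↦ ¬p x) _ (not_not.2 hx)
    · exact Perm.ofSubtype_apply_of_mem (p := fun x ↦ ¬p x) _ hx
  have disjoint_uv : u.Disjoint v := fun x ↦ by
    by_cases hx : p x <;> simp [u_apply, v_apply, hx]
  have mul_uv : u * v = σ := by
    ext x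
    by_cases hx : p x <;> simp [u_apply, v_apply, hp, hx]
  calc σ.cycleType = u.cycleType + v.cycleType := by rw [← disjoint_uv.cycleType_mul, mul_uv]
    _ = _ := by rw [Perm.cycleType_ofSubtype, Perm.cycleType_ofSubtype]

end Transport

section Involutive

variable {α : Type*} {r t : Perm α}

theorem semiconjBy_mul_inv_of_involutive (hr : Involutive r) (ht : Involutive t) :
    SemiconjBy r (t * r) (t * r)⁻¹ := by
  have hr_inv : r⁻¹ = r := Involutive.symm_eq_self_of_involutive r hr
  have ht_inv : t⁻¹ = t := Involutive.symm_eq_self_of_involutive t ht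
  rw [SemiconjBy, mul_inv_rev, hr_inv, ht_inv, mul_assoc]

theorem apply_zpow_mul_of_involutive (hr : Involutive r) (ht : Involutive t) (k : ℤ) (x : α) :
    r (((t * r) ^ k) x) = ((t * r) ^ (-k)) (r x) := by
  have h := (semiconjBy_mul_inv_of_involutive hr ht).zpow_right k
  rw [inv_zpow'] at h
  exact DFunLike.congr_fun h x

end Involutive

/-- A fixed-point-free involution, equivalently a perfect matching of the points of `α`. -/
structure IsFreeInvolution {α : Type*} (r : Perm α) : Prop where
  involutive : Involutive r
  apply_ne : ∀ x, r x ≠ x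

/-- The permutation `r` exchanges the two colour classes of the 2-colouring `p`. When `r` is an
involution, this says that `p` properly colours the graph joining each `x` to `r x`. -/
def Flips {α : Type*} (r : Perm α) (p : α → Prop) : Prop :=
  ∀ x, p (r x) ↔ ¬p x

section Bicoloring

variable {α : Type*} {r t : Perm α} {p : α → Prop}

namespace IsFreeInvolution

theorem conj (hr : IsFreeInvolution r) (s : Perm α) : IsFreeInvolution (s * r * s⁻¹) where
  involutive x := by simp [hr.involutive _]
  apply_ne x hx := hr.apply_ne (s⁻¹ x) (Perm.eq_inv_iff_eq.2 hx)

theorem not_sameCycle_mul (hr : IsFreeInvolution r) (ht : IsFreeInvolution t) (x : α) :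
    ¬(t * r).SameCycle x (r x) := by
  rintro ⟨k, hk⟩
  have r_apply (m : ℤ) := apply_zpow_mul_of_involutive hr.involutive ht.involutive m x
  obtain ⟨m, rfl | rfl⟩ := Int.even_or_odd' k
  · apply hr.apply_ne (((t * r) ^ m) x)
    rw [r_apply, ← hk, ← Perm.mul_apply, ← zpow_add]
    congr 2
    ring
  · apply ht.apply_ne (((t * r) ^ (m + 1)) x)
    calc t (((t * r) ^ (m + 1)) x)
        = (t * r) (r (((t * r) ^ (m + 1)) x)) := by rw [Perm.mul_apply, hr.involutive]
      _ = (t * r) (((t * r) ^ (-(m + 1))) (((t * r) ^ (2 * m + 1)) x)) := by rw [r_apply, hk]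
      _ = ((t * r) ^ (m + 1)) x := by
        rw [← Perm.mul_apply, ← Perm.mul_apply, mul_assoc, ← zpow_add, ← zpow_one_add]
        congr 2
        ring

theorem exists_flips (hr : IsFreeInvolution r) (ht : IsFreeInvolution t) :
    ∃ p, Flips r p ∧ Flips t p := by
  let c : α → Quotient (Perm.SameCycle.setoid (t * r)) := Quotient.mk _
  have c_eq_iff {x y} : c x = c y ↔ (t * r).SameCycle x y := Quotient.eq
  have c_ne (x) : c x ≠ c (r x) := fun h ↦ hr.not_sameCycle_mul ht x (c_eq_iff.1 h)
  have c_comm (x) : c (r x) = c (t x) := c_eq_iff.2 ⟨1, by simp [hr.involutive x]⟩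
  obtain ⟨_, -⟩ := exists_wellFoundedLT (Quotient (Perm.SameCycle.setoid (t * r)))
  -- `r` pairs the cycles of `t * r`; the class `p` consists of the smaller cycle of each pair.
  refine ⟨fun x ↦ c x < c (r x), fun x ↦ ?_, fun x ↦ ?_⟩
  · beta_reduce
    rw [hr.involutive, not_lt, (c_ne x).symm.le_iff_lt]
  · beta_reduce
    rw [← c_comm, c_comm (t x), ht.involutive, not_lt, (c_ne x).symm.le_iff_lt]

end IsFreeInvolution

namespace Flips

theorem mul_apply_iff (ht : Flips t p) (hr : Flips r p) (x : α) : p ((t * r) x) ↔ p x := by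
  rw [Perm.mul_apply, ht, hr, not_not]

theorem conj {s : Perm α} (hr : Flips r p) (hs : Flips s p) : Flips (s * r * s⁻¹) p := fun x ↦ by
  rw [Perm.mul_apply, hs.mul_apply_iff hr, ← not_iff_not, not_not, ← hs]
  simp

/-- The bijection between the colour classes induced by a permutation exchanging them. -/
def classEquiv (hr : Flips r p) : {x // p x} ≃ {x // ¬p x} :=
  r.subtypeEquiv fun x ↦ by rw [hr x, not_not]

theorem coe_classEquiv (hr : Flips r p) (x : {x // p x}) : (hr.classEquiv x : α) = r x :=
  rfl

section Fintype

variable [Fintype α] [DecidablePred p]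

theorem two_mul_card (hr : Flips r p) : 2 * Fintype.card {x // p x} = Fintype.card α := by
  rw [two_mul, ← Fintype.card_congr (sumCompl p), Fintype.card_sum,
    Fintype.card_congr hr.classEquiv]

theorem cycleType_mul [DecidableEq α] (hrp : Flips r p) (htp : Flips t p)
    (hr : Involutive r) (ht : Involutive t) :
    (t * r).cycleType = 2 • ((t * r).subtypePerm (htp.mul_apply_iff hrp)).cycleType := by
  let g : Perm {x // ¬p x} := (t * r).subtypePerm fun x ↦ not_congr (htp.mul_apply_iff hrp x)
  have semiconj_inv :
      Semiconj hrp.classEquiv ((t * r).subtypePerm (htp.mul_apply_iff hrp)) (g⁻¹ : Perm _) :=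
    fun x ↦ Subtype.ext (DFunLike.congr_fun (semiconjBy_mul_inv_of_involutive hr ht) x.1)
  rw [cycleType_eq_subtypePerm_add_subtypePerm (htp.mul_apply_iff hrp), two_nsmul,
    cycleType_eq_of_semiconj _ semiconj_inv, Perm.cycleType_inv]

end Fintype

end Flips

end Bicoloring

section SimultaneousConjugacy

variable {α : Type*} {r r' t t' : Perm α}

theorem exists_semiconjBy_of_semiconj_subtypePerm {p p' : α → Prop}
    (hr : Involutive r) (hr' : Involutive r') (ht : Involutive t) (ht' : Involutive t')
    (hrp : Flips r p) (hrp' : Flips r' p') (htp : Flips t p) (htp' : Flips t' p')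
    (e : {x // p x} ≃ {x // p' x})
    (he : Semiconj e ((t * r).subtypePerm (htp.mul_apply_iff hrp))
      ((t' * r').subtypePerm (htp'.mul_apply_iff hrp'))) :
    ∃ a : Perm α, SemiconjBy a r r' ∧ SemiconjBy a t t' := by
  classical
  let a : Perm α := subtypeCongr e (hrp.classEquiv.symm.trans (e.trans hrp'.classEquiv))
  have a_class (x : {x // p x}) : a x = e x := by simp [a, subtypeCongr]
  have a_r_class (x : {x // p x}) : a (r x) = r' (a x) := by
    rw [a_class, ← hrp.coe_classEquiv, ← hrp'.coe_classEquiv]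
    simp [a, subtypeCongr]
  have a_r (x : α) : a (r x) = r' (a x) := by
    by_cases hx : p x
    · exact a_r_class ⟨x, hx⟩
    · rw [← hr'.eq_iff, ← a_r_class ⟨r x, (hrp x).2 hx⟩, hr]
  have a_t_of_not (x : α) (hx : ¬p x) : a (t x) = t' (a x) := by
    let y : {x // p x} := ⟨r x, (hrp x).2 hx⟩
    calc a (t x) = a ((t * r).subtypePerm (htp.mul_apply_iff hrp) y) := by simp [y, hr x]
      _ = t' (r' (a y)) := by rw [a_class, he, a_class]; rfl
      _ = t' (a x) := by rw [← a_r, hr]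
  have a_t (x : α) : a (t x) = t' (a x) := by
    by_cases hx : p x
    · rw [← ht'.eq_iff, ← a_t_of_not (t x) fun h ↦ (htp x).1 h hx, ht]
    · exact a_t_of_not x hx
  exact ⟨a, Equiv.ext a_r, Equiv.ext a_t⟩

theorem exists_semiconjBy_of_cycleType_mul_eq [Fintype α] [DecidableEq α]
    (hr : IsFreeInvolution r) (hr' : IsFreeInvolution r')
    (ht : IsFreeInvolution t) (ht' : IsFreeInvolution t')
    (h : (t * r).cycleType = (t' * r').cycleType) :
    ∃ a : Perm α, SemiconjBy a r r' ∧ SemiconjBy a t t' := by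
  classical
  obtain ⟨p, hrp, htp⟩ := hr.exists_flips ht
  obtain ⟨p', hrp', htp'⟩ := hr'.exists_flips ht'
  have card_eq : Fintype.card {x // p x} = Fintype.card {x // p' x} :=
    Nat.eq_of_mul_eq_mul_left two_pos (hrp.two_mul_card.trans hrp'.two_mul_card.symm)
  rw [hrp.cycleType_mul htp hr.involutive ht.involutive,
    hrp'.cycleType_mul htp' hr'.involutive ht'.involutive] at h
  obtain ⟨e, he⟩ := exists_semiconj_of_cycleType_eq card_eq (nsmul_right_injective two_ne_zero h)
  exact exists_semiconjBy_of_semiconj_subtypePerm hr.involutive hr'.involutive ht.involutive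
    ht'.involutive hrp hrp' htp htp' e he

end SimultaneousConjugacy

theorem exists_centralizer_mul_mul_iff {G : Type*} [Group G] {r b s : G} :
    (∃ a ∈ Subgroup.centralizer {r}, ∃ c ∈ Subgroup.centralizer {r}, s = a * b * c) ↔
      ∃ a, SemiconjBy a r r ∧ SemiconjBy a (b * r * b⁻¹) (s * r * s⁻¹) := by
  simp only [Subgroup.mem_centralizer_singleton_iff]
  constructor
  · rintro ⟨a, ha, c, hc, rfl⟩
    refine ⟨a, ha, ?_⟩
    calc a * (b * r * b⁻¹) = a * (b * (c * r * c⁻¹) * b⁻¹) := by rw [mul_inv_eq_of_eq_mul hc]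
      _ = a * b * c * r * (a * b * c)⁻¹ * a := by group
  · rintro ⟨a, ha, hab⟩
    refine ⟨a, ha, (a * b)⁻¹ * s, ?_, by group⟩
    calc (a * b)⁻¹ * s * r = (a * b)⁻¹ * (s * r * s⁻¹ * a) * a⁻¹ * s := by group
      _ = (a * b)⁻¹ * (a * (b * r * b⁻¹)) * a⁻¹ * s := by rw [hab.eq]
      _ = r * ((a * b)⁻¹ * s) := by group

theorem Yprime_eq_double_coset_general {α : Type*} [Fintype α] [DecidableEq α] {r : Perm α}
    (hr : IsFreeInvolution r) (b : Perm α) :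
    {s : Perm α | (s * r * s⁻¹ * r).cycleType = (b * r * b⁻¹ * r).cycleType} =
      {s : Perm α | ∃ a ∈ Subgroup.centralizer {r}, ∃ c ∈ Subgroup.centralizer {r},
        s = a * b * c} := by
  ext s
  rw [Set.mem_ofPred_eq, Set.mem_ofPred_eq, exists_centralizer_mul_mul_iff]
  constructor
  · exact fun h ↦ exists_semiconjBy_of_cycleType_mul_eq hr hr (hr.conj b) (hr.conj s) h.symm
  · rintro ⟨a, har, hat⟩
    rw [← mul_inv_eq_of_eq_mul (hat.mul_right har).eq, Perm.cycleType_conj]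

section Rho

variable (n : ℕ)

theorem val_rho (x : Fin (2 * n)) :
    (rho n x).val = if x.val % 2 = 0 then x.val + 1 else x.val - 1 :=
  rfl

theorem isFreeInvolution_rho : IsFreeInvolution (rho n) where
  involutive := Involutive.toPerm_involutive _
  apply_ne x hx := by
    have := val_rho n x
    grind

theorem flips_rho_even : Flips (rho n) (fun x ↦ Even x.val) := fun x ↦ by
  have := val_rho n x
  grind

theorem val_finRotate {m : ℕ} (x : Fin m) : (finRotate m x).val = (x.val + 1) % m := by
  have := x.neZero
  rw [finRotate_apply, Fin.val_add, Fin.val_one', Nat.add_mod_mod]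

theorem flips_finRotate_even : Flips (finRotate (2 * n)) (fun x ↦ Even x.val) := fun x ↦ by
  beta_reduce
  rw [val_finRotate, Nat.even_iff, Nat.mod_mul_right_mod, ← Nat.even_iff, Nat.even_add_one]

/-- The bijection `k ↦ 2 * k` onto the colour class of even numbers, under which `finRotate n`
becomes the translation by `2`. -/
def finEquivEven : Fin n ≃ {x : Fin (2 * n) // Even x.val} where
  toFun k := ⟨⟨2 * k, by lia⟩, even_two_mul _⟩
  invFun x := ⟨x.1 / 2, by lia⟩
  left_inv k := by simp
  right_inv x := by ext; exact Nat.two_mul_div_two_of_even x.2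

variable {n}

theorem rho_eq_finRotate_of_even {x : Fin (2 * n)} (hx : Even x.val) :
    rho n x = finRotate (2 * n) x := by
  ext
  rw [val_rho, val_finRotate, if_pos (Nat.even_iff.1 hx), Nat.mod_eq_of_lt (by grind)]

theorem val_finRotate_conj_rho_mul_rho_of_even {x : Fin (2 * n)} (hx : Even x.val) :
    ((finRotate (2 * n) * rho n * (finRotate (2 * n))⁻¹ * rho n) x).val =
      (x.val + 2) % (2 * n) := by
  simp only [Perm.mul_apply, rho_eq_finRotate_of_even hx, Perm.inv_def, symm_apply_apply,
    val_finRotate, Nat.mod_add_mod, add_assoc]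

theorem cycleType_finRotate_conj_rho_mul_rho (hn : 2 ≤ n) :
    (finRotate (2 * n) * rho n * (finRotate (2 * n))⁻¹ * rho n).cycleType = {n, n} := by
  have hρ := isFreeInvolution_rho n
  have hρ_even := flips_rho_even n
  have hconj_even := hρ_even.conj (flips_finRotate_even n)
  have semiconj_even : Semiconj (finEquivEven n) (finRotate n)
      (Perm.subtypePerm _ (hconj_even.mul_apply_iff hρ_even)) := fun k ↦ by
    ext
    rw [Perm.subtypePerm_apply, val_finRotate_conj_rho_mul_rho_of_even (finEquivEven n k).2]
    change 2 * (finRotate n k).val = (2 * k.val + 2 * 1) % (2 * n)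
    rw [val_finRotate, ← mul_add, Nat.mul_mod_mul_left]
  rw [hρ_even.cycleType_mul hconj_even hρ.involutive (hρ.conj _).involutive,
    ← cycleType_eq_of_semiconj _ semiconj_even, cycleType_finRotate_of_le hn, two_nsmul]
  rfl

end Rho

/-- The set `Y' = {σ : σ·ρ·σ⁻¹·ρ is a product of two disjoint n-cycles}` is exactly
the double coset C_ρ·β·C_ρ, where C_ρ is the centralizer of ρ and β is the 2n-cycle
`x ↦ x + 1 (mod 2n)`. -/
theorem Yprime_eq_double_coset (n : ℕ) (hn : 2 ≤ n) :
    {σ : Equiv.Perm (Fin (2 * n)) |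
        (σ * rho n * σ⁻¹ * rho n).cycleType = {n, n}}
      = {σ : Equiv.Perm (Fin (2 * n)) |
          ∃ a ∈ Subgroup.centralizer {rho n}, ∃ b ∈ Subgroup.centralizer {rho n},
            σ = a * finRotate (2 * n) * b} := by
  rw [← cycleType_finRotate_conj_rho_mul_rho hn]
  exact Yprime_eq_double_coset_general (isFreeInvolution_rho n) (finRotate (2 * n))
end

section
/- Let n ≥ 2, and in S_{2n} let ρ be the involution pairing 2k with 2k+1. Then the number of permutations σ ∈ S_{2n} such that σ·ρ·σ⁻¹·ρ is a product of two disjoint n-cycles equals 2^{2n−1}·n!·(n−1)!. -/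
/-!
Write `τ = σ ρ σ⁻¹`. Then `τ ρ` is a product of two disjoint `n`-cycles exactly when `(ρ, τ)`
generates a dihedral group of order `2n` acting simply transitively on the `2n` points: reflections
are conjugate to `ρ` or `τ`, hence have no fixed points, and rotations are powers of `ρ τ`. Any two
simply transitive actions of the same group are intertwined by a permutation, and the permutations
commuting with such an action are themselves simply transitive.

Hence, for `C` the centralizer of `ρ`, the admissible `σ` form a single double coset `C σ₀ C` with
`C ∩ σ₀ C σ₀⁻¹` of order `2n`, so there are `|C|² / 2n = (2ⁿ n!)² / 2n` of them. An admissible `σ₀`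
is read off from the regular representation of the dihedral group.
-/

open Equiv Function DihedralGroup DoubleCoset

section DoubleCoset

variable {G : Type*} [Group G]

theorem preimage_mk_orbit_eq_doubleCoset (H K : Subgroup G) (a : G) :
    (QuotientGroup.mk : G → G ⧸ K) ⁻¹' MulAction.orbit H (a : G ⧸ K) = doubleCoset a H K := by
  ext g
  simp only [Set.mem_preimage, MulAction.mem_orbit_iff, mem_doubleCoset]
  constructor
  · rintro ⟨h, hg⟩
    exact ⟨h, h.2, (h * a)⁻¹ * g, QuotientGroup.eq.mp hg, by group⟩
  · rintro ⟨h, hh, k, hk, rfl⟩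
    exact ⟨⟨h, hh⟩, QuotientGroup.eq.mpr (by simpa [Subgroup.smul_def, mul_assoc] using hk)⟩

theorem stabilizer_mk_eq_map_conj (K : Subgroup G) (a : G) :
    MulAction.stabilizer G (a : G ⧸ K) = K.map (MulAut.conj a).toMonoidHom := by
  have h := MulAction.stabilizer_smul_eq_stabilizer_map_conj a ((1 : G) : G ⧸ K)
  rwa [MulAction.stabilizer_quotient, MulAction.Quotient.smul_coe, smul_eq_mul, mul_one] at h

theorem card_doubleCoset_mul_card_inf_conj (H K : Subgroup G) (a : G) :
    Nat.card (doubleCoset a (H : Set G) K) *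
        Nat.card ↥(H ⊓ K.map (MulAut.conj a).toMonoidHom) =
      Nat.card H * Nat.card K := by
  have hstab : Nat.card (MulAction.stabilizer H (a : G ⧸ K)) =
      Nat.card ↥(H ⊓ K.map (MulAut.conj a).toMonoidHom) := by
    rw [← stabilizer_mk_eq_map_conj, inf_comm, ← Subgroup.subgroupOf_map_subtype]
    exact Nat.card_congr (Subgroup.equivMapOfInjective _ _ H.subtype_injective).toEquiv
  rw [← preimage_mk_orbit_eq_doubleCoset, ← hstab,
    Nat.card_congr (QuotientGroup.preimageMkEquivSubgroupProdSet K _), Nat.card_prod, mul_assoc,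
    ← Nat.card_prod, Nat.card_congr (MulAction.orbitProdStabilizerEquivGroup H _), mul_comm]

theorem map_conj_centralizer_singleton (a g : G) :
    (Subgroup.centralizer {g}).map (MulAut.conj a).toMonoidHom =
      Subgroup.centralizer {a * g * a⁻¹} := by
  ext h
  have hconj : (MulAut.conj a).symm h * g = g * (MulAut.conj a).symm h ↔
      h * (a * g * a⁻¹) = a * g * a⁻¹ * h := by
    rw [← (MulAut.conj a).injective.eq_iff, map_mul, map_mul, MulEquiv.apply_symm_apply,
      MulAut.conj_apply]
  exact Subgroup.mem_map_equiv.trans (by simpa only [Subgroup.mem_centralizer_singleton_iff])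

theorem conj_mul_self_mul_mul_of_commute {h k g : G} (hh : Commute h g) (hk : Commute k g)
    (a : G) :
    h * a * k * g * (h * a * k)⁻¹ * g = h * (a * g * a⁻¹ * g) * h⁻¹ :=
  calc h * a * k * g * (h * a * k)⁻¹ * g
      = h * a * (k * g) * k⁻¹ * a⁻¹ * h⁻¹ * (g * h) * h⁻¹ := by group
    _ = h * (a * g * a⁻¹ * g) * h⁻¹ := by rw [hk.eq, ← hh.eq]; group

end DoubleCoset

section Period

variable {α : Type*}

theorem apply_ne_self_of_two_le_minimalPeriod {f : α → α} {x : α} (h : 2 ≤ minimalPeriod f x) :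
    f x ≠ x := fun hx => by
  rw [minimalPeriod_eq_one_iff_isFixedPt.mpr hx] at h
  omega

theorem pow_eq_one_of_minimalPeriod_eq {π : Perm α} {m : ℕ} (h : ∀ x, minimalPeriod π x = m) :
    π ^ m = 1 := by
  ext x
  rw [← h x, Perm.one_apply, ← Perm.iterate_eq_pow, iterate_minimalPeriod]

variable [Fintype α] [DecidableEq α]

theorem minimalPeriod_eq_card_support_of_mem_cycleFactorsFinset {π c : Perm α}
    (hc : c ∈ π.cycleFactorsFinset) {x : α} (hx : x ∈ c.support) :
    minimalPeriod π x = c.support.card := by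
  have hcycle := Perm.isCycleOn_support_of_mem_cycleFactorsFinset hc
  refine Nat.dvd_right_iff_eq.mp fun i => ?_
  rw [← hcycle.pow_apply_eq hx, ← isPeriodicPt_iff_minimalPeriod_dvd, IsPeriodicPt, IsFixedPt,
    Perm.iterate_eq_pow]

theorem cycleType_eq_replicate_of_minimalPeriod_eq {π : Perm α} {k m : ℕ} (hm : 2 ≤ m)
    (hα : Fintype.card α = k * m) (h : ∀ x, minimalPeriod π x = m) :
    π.cycleType = Multiset.replicate k m := by
  have hsupport : π.support = Finset.univ := Finset.eq_univ_of_forall fun x =>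
    Perm.mem_support.mpr (apply_ne_self_of_two_le_minimalPeriod (hm.trans (h x).ge))
  have hmem : ∀ l ∈ π.cycleType, l = m := by
    intro l hl
    obtain ⟨c, hc, rfl⟩ := Multiset.mem_map.mp (Perm.cycleType_def π ▸ hl)
    obtain ⟨x, hx⟩ := (Perm.mem_cycleFactorsFinset_iff.mp hc).1.nonempty_support
    exact (minimalPeriod_eq_card_support_of_mem_cycleFactorsFinset hc hx).symm.trans (h x)
  have hreplicate := Multiset.eq_replicate_card.mpr hmem
  have hsum := Perm.sum_cycleType π
  rw [hsupport, Finset.card_univ, hα, hreplicate, Multiset.sum_replicate, smul_eq_mul] at hsum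
  rw [hreplicate, Nat.eq_of_mul_eq_mul_right (by omega) hsum]

theorem minimalPeriod_eq_of_cycleType_eq_replicate {π : Perm α} {k m : ℕ}
    (hα : Fintype.card α = k * m) (h : π.cycleType = Multiset.replicate k m) (x : α) :
    minimalPeriod π x = m := by
  have hsupport : π.support = Finset.univ := by
    rw [← Finset.card_eq_iff_eq_univ, ← Perm.sum_cycleType, h, hα, Multiset.sum_replicate,
      smul_eq_mul]
  have hx : x ∈ π.support := hsupport ▸ Finset.mem_univ x
  have hc := Perm.cycleOf_mem_cycleFactorsFinset_iff.mpr hx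
  have hperiod := minimalPeriod_eq_card_support_of_mem_cycleFactorsFinset hc
    (Perm.mem_support_cycleOf_iff.mpr ⟨.rfl, hx⟩)
  refine Multiset.eq_of_mem_replicate (n := k) ?_
  rw [← h, hperiod, Perm.cycleType_def]
  exact Multiset.mem_map_of_mem _ hc

theorem card_centralizer_of_cycleType_eq_replicate {k m : ℕ} (hα : Fintype.card α = k * m)
    (hk : k ≠ 0) {π : Perm α} (hπ : π.cycleType = Multiset.replicate k m) :
    Nat.card (Subgroup.centralizer {π}) = m ^ k * k.factorial := by
  rw [Perm.nat_card_centralizer, hπ, Multiset.sum_replicate, smul_eq_mul, ← hα, Nat.sub_self,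
    Multiset.prod_replicate, Multiset.toFinset_replicate, if_neg hk]
  simp

end Period

section RegularRep

variable {G α : Type*} [Group G]

/-- A permutation representation is regular (simply transitive) if every orbit map is a bijection.
It is a predicate on homomorphisms, not on `MulAction` instances, because several actions of the
same group on the same set are compared. -/
def IsRegularRep (φ : G →* Perm α) : Prop :=
  ∀ x, Bijective fun g => φ g x

theorem isRegularRep_of_free [Finite α] {φ : G →* Perm α} (hcard : Nat.card G = Nat.card α)
    (hfree : ∀ g x, φ g x = x → g = 1) : IsRegularRep φ := by
  refine fun x => Injective.bijective_of_nat_card_le (fun g h hgh => ?_) hcard.ge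
  refine (inv_mul_eq_one.mp (hfree (h⁻¹ * g) x ?_)).symm
  rw [map_mul, map_inv, Perm.mul_apply, Perm.inv_eq_iff_eq]
  exact hgh

theorem exists_isRegularRep (e : G ≃ α) : ∃ φ : G →* Perm α, IsRegularRep φ :=
  ⟨e.permCongrHom.toMonoidHom.comp (MulAction.toPermHom G G),
    fun x => e.bijective.comp (Group.mulRight_bijective (e.symm x))⟩

namespace IsRegularRep

variable {φ φ' : G →* Perm α}

theorem conj (hφ : IsRegularRep φ) (c : Perm α) :
    IsRegularRep ((MulAut.conj c).toMonoidHom.comp φ) :=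
  fun x => c.bijective.comp (hφ (c⁻¹ x))

theorem apply_eq_self_iff (hφ : IsRegularRep φ) {g : G} {x : α} : φ g x = x ↔ g = 1 := by
  simpa using (hφ x).injective.eq_iff (a := g) (b := 1)

theorem minimalPeriod_apply (hφ : IsRegularRep φ) (g : G) (x : α) :
    minimalPeriod (φ g) x = orderOf g := by
  refine Nat.dvd_right_iff_eq.mp fun i => ?_
  rw [← isPeriodicPt_iff_minimalPeriod_dvd, IsPeriodicPt, IsFixedPt, Perm.iterate_eq_pow,
    ← map_pow, hφ.apply_eq_self_iff, orderOf_dvd_iff_pow_eq_one]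

theorem cycleType_apply [Fintype α] [DecidableEq α] (hφ : IsRegularRep φ) {g : G}
    (hg : 2 ≤ orderOf g) {k : ℕ} (hα : Fintype.card α = k * orderOf g) :
    (φ g).cycleType = Multiset.replicate k (orderOf g) :=
  cycleType_eq_replicate_of_minimalPeriod_eq hg hα (hφ.minimalPeriod_apply g)

theorem exists_intertwiner (hφ : IsRegularRep φ) (hφ' : IsRegularRep φ') (x y : α) :
    ∃ h : Perm α, (∀ g, SemiconjBy h (φ g) (φ' g)) ∧ h x = y := by
  let e := Equiv.ofBijective _ (hφ x)
  let e' := Equiv.ofBijective _ (hφ' y)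
  have he : ∀ g, (e.symm.trans e') (φ g x) = φ' g y :=
    fun g => congrArg e' (e.symm_apply_apply g)
  refine ⟨e.symm.trans e', fun g => Perm.ext fun z => ?_, by simpa using he 1⟩
  obtain ⟨k, rfl⟩ := (hφ x).surjective z
  have hmul : φ g (φ k x) = φ (g * k) x := by rw [map_mul, Perm.mul_apply]
  rw [Perm.mul_apply, Perm.mul_apply, hmul, he, he, map_mul, Perm.mul_apply]

theorem eq_of_mem_centralizer_range (hφ : IsRegularRep φ) {h k : Perm α}
    (hh : h ∈ Subgroup.centralizer φ.range) (hk : k ∈ Subgroup.centralizer φ.range) {x : α}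
    (hx : h x = k x) : h = k := by
  ext y
  obtain ⟨g, rfl⟩ := (hφ x).surjective y
  have hcomm : ∀ c ∈ Subgroup.centralizer (φ.range : Set (Perm α)), c (φ g x) = φ g (c x) :=
    fun c hc => (congrArg (· x) (Subgroup.mem_centralizer_iff.mp hc (φ g) ⟨g, rfl⟩)).symm
  rw [hcomm h hh, hcomm k hk, hx]

theorem card_centralizer_range [Nonempty α] (hφ : IsRegularRep φ) :
    Nat.card (Subgroup.centralizer (φ.range : Set (Perm α))) = Nat.card α := by
  obtain ⟨x⟩ := ‹Nonempty α›
  refine Nat.card_eq_of_bijective (fun h => h.1 x) ⟨fun h k hx => ?_, fun y => ?_⟩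
  · exact Subtype.ext (hφ.eq_of_mem_centralizer_range h.2 k.2 hx)
  · obtain ⟨h, hcomm, hxy⟩ := hφ.exists_intertwiner hφ x y
    refine ⟨⟨h, Subgroup.mem_centralizer_iff.mpr ?_⟩, hxy⟩
    rintro _ ⟨g, rfl⟩
    exact (hcomm g).eq.symm

end IsRegularRep

theorem exists_isRegularRep_apply_eq [Fintype α] [DecidableEq α] (e : G ≃ α)
    {g : G} (hg : 2 ≤ orderOf g) {k : ℕ} (hα : Fintype.card α = k * orderOf g) {π : Perm α}
    (hπ : π.cycleType = Multiset.replicate k (orderOf g)) :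
    ∃ φ : G →* Perm α, IsRegularRep φ ∧ φ g = π := by
  obtain ⟨φ, hφ⟩ := exists_isRegularRep e
  obtain ⟨c, hc⟩ := isConj_iff.mp
    (Perm.isConj_of_cycleType_eq ((hφ.cycleType_apply hg hα).trans hπ.symm))
  exact ⟨_, hφ.conj c, hc⟩

end RegularRep

section Dihedral

variable {n : ℕ} {H α : Type*} [Group H]

theorem isConj_sr_zero_or_isConj_sr_one (i : ZMod n) :
    IsConj (sr 0) (sr i) ∨ IsConj (sr 1) (sr i) := by
  obtain ⟨j, rfl⟩ := ZMod.intCast_surjective i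
  obtain ⟨k, rfl | rfl⟩ := j.even_or_odd'
  · exact .inl (isConj_iff.mpr ⟨r (-k), by simp [two_mul]⟩)
  · refine .inr (isConj_iff.mpr ⟨r (-k), ?_⟩)
    simp only [r_mul_sr, sr_mul_r, inv_r, neg_neg, sub_neg_eq_add]
    push_cast
    ring_nf

theorem closure_sr_zero_sr_one : Subgroup.closure {sr 0, sr (1 : ZMod n)} = ⊤ := by
  set S := Subgroup.closure {sr 0, sr (1 : ZMod n)}
  have h0 : sr 0 ∈ S := Subgroup.subset_closure (by simp)
  have h1 : sr 1 ∈ S := Subgroup.subset_closure (by simp)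
  have hr : ∀ i, r i ∈ S := by
    intro i
    obtain ⟨k, rfl⟩ := ZMod.intCast_surjective i
    rw [← r_one_zpow]
    exact zpow_mem (by simpa using mul_mem h0 h1) k
  refine S.eq_top_iff' |>.mpr ?_
  rintro (i | i)
  · exact hr i
  · simpa using mul_mem h0 (hr i)

theorem zpow_eq_zpow_of_intCast_eq {x : H} (hx : x ^ n = 1) {a b : ℤ} (h : (a : ZMod n) = b) :
    x ^ a = x ^ b := by
  rw [ZMod.intCast_eq_intCast_iff] at h
  exact zpow_eq_zpow_iff_modEq.mpr (h.of_dvd (Int.natCast_dvd_natCast.mpr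
    (orderOf_dvd_of_pow_eq_one hx)))

theorem mul_zpow_mul_eq_mul_mul_zpow_neg {s t : H} (hs : s * s = 1) (ht : t * t = 1) (k : ℤ) :
    (s * t) ^ k * s = s * (s * t) ^ (-k) := by
  have hinv : (s * t)⁻¹ = t * s := by
    rw [mul_inv_rev, inv_eq_of_mul_eq_one_left hs, inv_eq_of_mul_eq_one_left ht]
  have hsemiconj : SemiconjBy s (s * t)⁻¹ (s * t) := by rw [hinv, SemiconjBy, mul_assoc]
  rw [zpow_neg, ← inv_zpow]
  exact (hsemiconj.zpow_right k).symm

/-- The homomorphism out of the dihedral group given by its Coxeter presentation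
`⟨s, t ∣ s² = t² = (st)ⁿ = 1⟩`, in which `s` is `sr 0` and `t` is `sr 1`. -/
def dihedralLift {s t : H} (hs : s * s = 1) (ht : t * t = 1) (hst : (s * t) ^ n = 1) :
    DihedralGroup n →* H :=
  MonoidHom.mk' (fun | r i => (s * t) ^ (i.cast : ℤ) | sr i => s * (s * t) ^ (i.cast : ℤ)) <| by
    have hflip := mul_zpow_mul_eq_mul_mul_zpow_neg hs ht
    rintro (i | i) (j | j)
    · rw [r_mul_r, ← zpow_add]
      exact zpow_eq_zpow_of_intCast_eq hst (by simp)
    · rw [r_mul_sr, ← mul_assoc, hflip, mul_assoc, ← zpow_add]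
      exact congrArg (s * ·) (zpow_eq_zpow_of_intCast_eq hst (by simp [sub_eq_neg_add]))
    · rw [sr_mul_r, mul_assoc, ← zpow_add]
      exact congrArg (s * ·) (zpow_eq_zpow_of_intCast_eq hst (by simp))
    · rw [sr_mul_sr, mul_assoc, ← mul_assoc _ s, hflip, mul_assoc, ← mul_assoc, hs, one_mul,
        ← zpow_add]
      exact zpow_eq_zpow_of_intCast_eq hst (by simp [sub_eq_neg_add])

theorem dihedralLift_sr_zero {s t : H} (hs : s * s = 1) (ht : t * t = 1)
    (hst : (s * t) ^ n = 1) : dihedralLift hs ht hst (sr 0) = s := by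
  simp [dihedralLift]

theorem dihedralLift_sr_one {s t : H} (hs : s * s = 1) (ht : t * t = 1)
    (hst : (s * t) ^ n = 1) : dihedralLift hs ht hst (sr 1) = t := by
  have hone : (s * t) ^ ((1 : ZMod n).cast : ℤ) = (s * t) ^ (1 : ℤ) :=
    zpow_eq_zpow_of_intCast_eq hst (by simp)
  simp [dihedralLift, hone, ← mul_assoc, hs]

theorem isRegularRep_of_dihedralGroup [Finite α] (hα : Nat.card α = 2 * n)
    {φ : DihedralGroup n →* Perm α} (hr : ∀ x, minimalPeriod (φ (r 1)) x = n)
    (hsr_zero : ∀ x, φ (sr 0) x ≠ x) (hsr_one : ∀ x, φ (sr 1) x ≠ x) : IsRegularRep φ := by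
  have hconj : ∀ g h : DihedralGroup n, IsConj g h → (∀ x, φ g x ≠ x) → ∀ x, φ h x ≠ x := by
    intro g h hgh hg x hx
    obtain ⟨c, rfl⟩ := isConj_iff.mp hgh
    refine hg (φ c⁻¹ x) ?_
    rwa [map_mul, map_mul, Perm.mul_apply, Perm.mul_apply, map_inv, ← Perm.eq_inv_iff_eq,
      ← map_inv] at hx
  refine isRegularRep_of_free (nat_card.trans hα.symm) ?_
  rintro (i | i) x hx
  · obtain ⟨k, rfl⟩ := ZMod.intCast_surjective i
    rw [← r_one_zpow, map_zpow, ← Perm.smul_def,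
      MulAction.zpow_smul_eq_iff_minimalPeriod_dvd] at hx
    have hdvd : (n : ℤ) ∣ k := hr x ▸ hx
    rw [(ZMod.intCast_zmod_eq_zero_iff_dvd k n).mpr hdvd, r_zero]
  · rcases isConj_sr_zero_or_isConj_sr_one i with h | h
    · exact absurd hx (hconj _ _ h hsr_zero x)
    · exact absurd hx (hconj _ _ h hsr_one x)

end Dihedral

section TwoCycles

variable {n : ℕ} {α : Type*} [Fintype α] [DecidableEq α]

theorem exists_isRegularRep_dihedralGroup (hα : Fintype.card α = 2 * n) {s t : Perm α}
    (hs : s.cycleType = Multiset.replicate n 2) (ht : t.cycleType = Multiset.replicate n 2)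
    (hts : (t * s).cycleType = {n, n}) :
    ∃ φ : DihedralGroup n →* Perm α, IsRegularRep φ ∧ φ (sr 0) = s ∧ φ (sr 1) = t := by
  have hα' : Fintype.card α = n * 2 := hα.trans (mul_comm 2 n)
  have hs_period := minimalPeriod_eq_of_cycleType_eq_replicate hα' hs
  have ht_period := minimalPeriod_eq_of_cycleType_eq_replicate hα' ht
  have hss : s * s = 1 := (sq s).symm.trans (pow_eq_one_of_minimalPeriod_eq hs_period)
  have htt : t * t = 1 := (sq t).symm.trans (pow_eq_one_of_minimalPeriod_eq ht_period)
  have hst : (s * t).cycleType = Multiset.replicate 2 n := by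
    rw [← Perm.cycleType_inv, mul_inv_rev, inv_eq_of_mul_eq_one_left hss,
      inv_eq_of_mul_eq_one_left htt, hts]
    rfl
  have hst_period := minimalPeriod_eq_of_cycleType_eq_replicate hα hst
  let φ := dihedralLift hss htt (pow_eq_one_of_minimalPeriod_eq hst_period)
  have hφs : φ (sr 0) = s := dihedralLift_sr_zero _ _ _
  have hφt : φ (sr 1) = t := dihedralLift_sr_one _ _ _
  have hφr : φ (r 1) = s * t := by rw [← hφs, ← hφt, ← map_mul, sr_mul_sr, sub_zero]
  refine ⟨φ, isRegularRep_of_dihedralGroup (Nat.card_eq_fintype_card.trans hα) ?_ ?_ ?_, hφs, hφt⟩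
  · rwa [hφr]
  · rw [hφs]
    exact fun x => apply_ne_self_of_two_le_minimalPeriod (hs_period x).ge
  · rw [hφt]
    exact fun x => apply_ne_self_of_two_le_minimalPeriod (ht_period x).ge

theorem exists_commute_and_semiconjBy [Nonempty α] (hα : Fintype.card α = 2 * n)
    {s t t' : Perm α} (hs : s.cycleType = Multiset.replicate n 2)
    (ht : t.cycleType = Multiset.replicate n 2) (ht' : t'.cycleType = Multiset.replicate n 2)
    (hts : (t * s).cycleType = {n, n}) (ht's : (t' * s).cycleType = {n, n}) :
    ∃ h : Perm α, Commute h s ∧ SemiconjBy h t t' := by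
  obtain ⟨φ, hφ, hφs, hφt⟩ := exists_isRegularRep_dihedralGroup hα hs ht hts
  obtain ⟨φ', hφ', hφ's, hφ't⟩ := exists_isRegularRep_dihedralGroup hα hs ht' ht's
  obtain ⟨x⟩ := ‹Nonempty α›
  obtain ⟨h, hcomm, -⟩ := hφ.exists_intertwiner hφ' x x
  refine ⟨h, ?_, ?_⟩
  · simpa only [Commute, hφs, hφ's] using hcomm (sr 0)
  · simpa only [hφt, hφ't] using hcomm (sr 1)

variable {ρ : Perm α}

theorem exists_cycleType_conj_mul_self_eq (hn : 2 ≤ n) (hα : Fintype.card α = 2 * n)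
    (hρ : ρ.cycleType = Multiset.replicate n 2) :
    ∃ σ : Perm α, (σ * ρ * σ⁻¹ * ρ).cycleType = {n, n} := by
  have : NeZero n := ⟨by omega⟩
  have hα' : Fintype.card α = n * 2 := hα.trans (mul_comm 2 n)
  obtain ⟨e⟩ : Nonempty (DihedralGroup n ≃ α) :=
    Fintype.card_eq.mp (DihedralGroup.card.trans hα.symm)
  obtain ⟨φ, hφ, hφρ⟩ := exists_isRegularRep_apply_eq e (g := sr 1) (k := n) (π := ρ)
    (orderOf_sr 1).ge (by rwa [orderOf_sr]) (by rwa [orderOf_sr])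
  have hsr : (φ (sr 0)).cycleType = Multiset.replicate n 2 := by
    simpa using hφ.cycleType_apply (orderOf_sr (n := n) 0).ge (k := n) (by rwa [orderOf_sr])
  obtain ⟨σ, hσ⟩ := isConj_iff.mp (Perm.isConj_of_cycleType_eq (hρ.trans hsr.symm))
  refine ⟨σ, ?_⟩
  rw [hσ, ← hφρ, ← map_mul, sr_mul_sr, sub_zero,
    hφ.cycleType_apply (by rwa [orderOf_r_one]) (k := 2) (by rwa [orderOf_r_one]), orderOf_r_one]
  rfl

theorem setOf_cycleType_conj_mul_self_eq_doubleCoset [Nonempty α]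
    (hα : Fintype.card α = 2 * n) (hρ : ρ.cycleType = Multiset.replicate n 2) {σ₀ : Perm α}
    (hσ₀ : (σ₀ * ρ * σ₀⁻¹ * ρ).cycleType = {n, n}) :
    {σ : Perm α | (σ * ρ * σ⁻¹ * ρ).cycleType = {n, n}} =
      doubleCoset σ₀ (Subgroup.centralizer {ρ}) (Subgroup.centralizer {ρ}) := by
  ext σ
  simp only [Set.mem_ofPred_eq, mem_doubleCoset, SetLike.mem_coe,
    Subgroup.mem_centralizer_singleton_iff]
  constructor
  · intro hσ
    obtain ⟨h, hhρ, hhσ⟩ := exists_commute_and_semiconjBy hα hρ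
      (Perm.cycleType_conj.trans hρ) (Perm.cycleType_conj.trans hρ) hσ₀ hσ
    refine ⟨h, hhρ, (h * σ₀)⁻¹ * σ, ?_, by group⟩
    calc (h * σ₀)⁻¹ * σ * ρ = (h * σ₀)⁻¹ * (σ * ρ * σ⁻¹ * h) * h⁻¹ * σ := by group
      _ = ρ * ((h * σ₀)⁻¹ * σ) := by rw [← hhσ.eq]; group
  · rintro ⟨h, hh, k, hk, rfl⟩
    rw [conj_mul_self_mul_mul_of_commute hh hk, Perm.cycleType_conj, hσ₀]

theorem card_centralizer_inf_map_conj [Nonempty α] (hα : Fintype.card α = 2 * n)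
    (hρ : ρ.cycleType = Multiset.replicate n 2) {σ : Perm α}
    (hσ : (σ * ρ * σ⁻¹ * ρ).cycleType = {n, n}) :
    Nat.card ↥(Subgroup.centralizer {ρ} ⊓
      (Subgroup.centralizer {ρ}).map (MulAut.conj σ).toMonoidHom) = 2 * n := by
  obtain ⟨φ, hφ, hφρ, hφτ⟩ := exists_isRegularRep_dihedralGroup hα hρ
    (Perm.cycleType_conj.trans hρ) hσ
  have hrange : φ.range = Subgroup.closure {ρ, σ * ρ * σ⁻¹} := by
    rw [MonoidHom.range_eq_map, ← closure_sr_zero_sr_one, MonoidHom.map_closure, Set.image_pair,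
      hφρ, hφτ]
  have hinf : Subgroup.centralizer {ρ} ⊓ Subgroup.centralizer {σ * ρ * σ⁻¹} =
      Subgroup.centralizer (φ.range : Set (Perm α)) := by
    rw [hrange, Subgroup.centralizer_closure]
    exact SetLike.coe_injective Set.centralizer_union.symm
  rw [map_conj_centralizer_singleton, hinf, hφ.card_centralizer_range, Nat.card_eq_fintype_card,
    hα]

theorem card_Yprime_general (hn : 2 ≤ n) (hα : Fintype.card α = 2 * n)
    (hρ : ρ.cycleType = Multiset.replicate n 2) :
    Nat.card {σ : Perm α | (σ * ρ * σ⁻¹ * ρ).cycleType = {n, n}} =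
      2 ^ (2 * n - 1) * n.factorial * (n - 1).factorial := by
  have : Nonempty α := Fintype.card_pos_iff.mp (by omega)
  obtain ⟨σ₀, hσ₀⟩ := exists_cycleType_conj_mul_self_eq hn hα hρ
  have hcard := card_doubleCoset_mul_card_inf_conj
    (Subgroup.centralizer {ρ}) (Subgroup.centralizer {ρ}) σ₀
  rw [card_centralizer_inf_map_conj hα hρ hσ₀,
    ← setOf_cycleType_conj_mul_self_eq_doubleCoset hα hρ hσ₀,
    card_centralizer_of_cycleType_eq_replicate (hα.trans (mul_comm 2 n)) (by omega) hρ] at hcard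
  refine Nat.eq_of_mul_eq_mul_right (show 0 < 2 * n by omega) (hcard.trans ?_)
  obtain ⟨m, rfl⟩ : ∃ m, n = m + 1 := ⟨n - 1, by omega⟩
  rw [show 2 * (m + 1) - 1 = 2 * m + 1 by omega, Nat.add_sub_cancel, Nat.factorial_succ]
  ring

end TwoCycles

theorem rho_apply_val (n : ℕ) (x : Fin (2 * n)) :
    (rho n x).val = if x.val % 2 = 0 then x.val + 1 else x.val - 1 := rfl

theorem minimalPeriod_rho (n : ℕ) (x : Fin (2 * n)) : minimalPeriod (rho n) x = 2 := by
  refine minimalPeriod_eq_prime ?_ ?_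
  · exact Function.Involutive.toPerm_involutive _ x
  · intro h
    have := congrArg Fin.val h
    rw [rho_apply_val] at this
    split_ifs at this <;> omega

theorem cycleType_rho (n : ℕ) : (rho n).cycleType = Multiset.replicate n 2 :=
  cycleType_eq_replicate_of_minimalPeriod_eq le_rfl (by rw [Fintype.card_fin, mul_comm])
    (minimalPeriod_rho n)

/-- The number of permutations σ of `Fin (2n)` such that σ·ρ·σ⁻¹·ρ is a product of two
disjoint n-cycles equals `2^(2n-1)·n!·(n-1)!`. -/
theorem card_Yprime (n : ℕ) (hn : 2 ≤ n) :
    Nat.card {σ : Equiv.Perm (Fin (2 * n)) |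
        (σ * rho n * σ⁻¹ * rho n).cycleType = {n, n}}
      = 2 ^ (2 * n - 1) * n.factorial * (n - 1).factorial :=
  card_Yprime_general hn (Fintype.card_fin _) (cycleType_rho n)
end

section
/- Let n ≥ 1, and in S_{2n} let ρ be the involution pairing 2k with 2k+1, C_ρ its centralizer, and β the 2n-cycle x ↦ x+1 (mod 2n). Then the intersection C_ρ ∩ β·C_ρ·β⁻¹ has exactly 2n elements (it is the dihedral group D_n of order 2n). -/
/-!
Conjugating `C_ρ` by `β` gives the centralizer of `σ = βρβ⁻¹`, so the intersection is the
centralizer of `{ρ, σ}`. Let `A` be a cyclic group with generator `c` and `ψ : A → {±1}` a character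
with `ψ c = -1`; for `A = Fin (2n)`, `c = 1` and `ψ x = (-1) ^ x` one has `ρ x = x + ψ x • c` and
`σ x = x - ψ x • c`. As `{ρ x, σ x} = {x + c, x - c}` for every `x`, the group `⟨ρ, σ⟩` is
transitive, and a permutation commuting with it is determined by its value at `0`. Conversely every
`a` is such a value: since `ψ` is multiplicative and even, `x ↦ a + ψ a • x` commutes with both
`ρ` and `σ`.
-/

open Equiv.Perm MulAction

section Group

theorem conj_centralizer_singleton {G : Type*} [Group G] (a b : G) :
    {x : G | ∃ k ∈ Subgroup.centralizer {a}, b * k * b⁻¹ = x} =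
      Subgroup.centralizer {b * a * b⁻¹} := by
  ext x
  simp only [Set.mem_ofPred_eq, SetLike.mem_coe, Subgroup.mem_centralizer_singleton_iff]
  constructor
  · rintro ⟨k, hk, rfl⟩
    exact (Commute.conj_iff b).2 hk
  · intro hx
    refine ⟨b⁻¹ * x * b, (Commute.conj_iff b).1 ?_, by group⟩
    rwa [show b * (b⁻¹ * x * b) * b⁻¹ = x by group]

theorem centralizer_inter_conj_eq_centralizer_pair {G : Type*} [Group G] (a b : G) :
    (Subgroup.centralizer {a} ∩ {x : G | ∃ k ∈ Subgroup.centralizer {a}, b * k * b⁻¹ = x} : Set G) =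
      Subgroup.centralizer {a, b * a * b⁻¹} := by
  rw [conj_centralizer_singleton]
  exact Set.centralizer_union.symm

theorem injOn_apply_centralizer_of_isPretransitive {α : Type*} {S : Set (Equiv.Perm α)}
    [IsPretransitive (Subgroup.closure S) α] (x : α) :
    Set.InjOn (fun g : Equiv.Perm α ↦ g x) (Subgroup.centralizer S) := by
  rw [← Subgroup.centralizer_closure]
  intro g hg h hh (hgh : g x = h x)
  ext y
  obtain ⟨⟨k, hk⟩, rfl⟩ := exists_smul_eq (Subgroup.closure S) x y
  calc g (k x) = k (g x) := (DFunLike.congr_fun (hg k hk) x).symm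
    _ = k (h x) := by rw [hgh]
    _ = h (k x) := DFunLike.congr_fun (hh k hk) x

theorem isPretransitive_of_add_mem_orbit {G A : Type*} [Group G] [AddGroup A] [MulAction G A]
    {c : A} (hgen : AddSubgroup.zmultiples c = ⊤) (hadd : ∀ x : A, x + c ∈ orbit G x) :
    IsPretransitive G A := by
  suffices hzsmul : ∀ m : ℤ, m • c ∈ orbit G (0 : A) by
    refine (isPretransitive_iff_base (0 : A)).2 fun y ↦ ?_
    obtain ⟨m, rfl⟩ := AddSubgroup.mem_zmultiples_iff.1 (hgen ▸ AddSubgroup.mem_top y)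
    exact hzsmul m
  intro m
  induction m with
  | zero =>
    rw [zero_zsmul]
    exact mem_orbit_self 0
  | succ m ih =>
    rw [add_zsmul, one_zsmul, ← orbit_eq_iff.2 ih]
    exact hadd _
  | pred m ih =>
    have hnext : (-m - 1 : ℤ) • c + c = (-m : ℤ) • c := by rw [← add_one_zsmul, sub_add_cancel]
    rw [← orbit_eq_iff.2 ih, mem_orbit_symm, ← hnext]
    exact hadd _

end Group

section SignedShift

variable {A : Type*} [AddCommGroup A] (ψ : AddChar A ℤˣ)

theorem addChar_neg (x : A) : ψ (-x) = ψ x := by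
  rw [AddChar.map_neg_eq_inv, Int.units_inv_eq_self]

theorem addChar_units_smul (u : ℤˣ) (x : A) : ψ (u • x) = ψ x := by
  obtain rfl | rfl := Int.units_eq_one_or u
  · rw [one_smul]
  · rw [Units.neg_smul, one_smul, addChar_neg]

/-- The involution `x ↦ x + ψ x • c`, which moves `x` by `c` or `-c` according to its sign `ψ x`.
It abstracts `rho n`; it squares to the identity because `ψ c = -1` flips the sign of `x`. -/
def signedShift (c : A) (hc : ψ c = -1) : Equiv.Perm A :=
  Function.Involutive.toPerm (fun x ↦ x + ψ x • c) fun x ↦ by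
    simp only [AddChar.map_add_eq_mul, addChar_units_smul, hc, mul_neg, mul_one, Units.neg_smul,
      add_neg_cancel_right]

/-- The involutions `x ↦ x + ψ x • c` and `x ↦ x - ψ x • c`, which abstract `ρ` and `βρβ⁻¹`. -/
def signedShiftPair (c : A) (hc : ψ c = -1) : Set (Equiv.Perm A) :=
  {signedShift ψ c hc, signedShift ψ (-c) ((addChar_neg ψ c).trans hc)}

/-- The affine permutation `x ↦ a + ψ a • x`: a translation when `ψ a = 1` and a reflection when
`ψ a = -1`. As `a` varies, these are the elements of the dihedral group. -/
def signedAffine (a : A) : Equiv.Perm A :=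
  Equiv.addLeft a * toPerm (ψ a)

variable {ψ} {c : A}

theorem signedShift_apply (hc : ψ c = -1) (x : A) : signedShift ψ c hc x = x + ψ x • c :=
  rfl

theorem signedAffine_apply (a x : A) : signedAffine ψ a x = a + ψ a • x :=
  rfl

theorem conj_addRight_signedShift (hc : ψ c = -1) :
    Equiv.addRight c * signedShift ψ c hc * (Equiv.addRight c)⁻¹ =
      signedShift ψ (-c) ((addChar_neg ψ c).trans hc) := by
  rw [mul_inv_eq_iff_eq_mul]
  ext x
  simp only [mul_apply, Equiv.coe_addRight, signedShift_apply, AddChar.map_add_eq_mul, hc, mul_neg,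
    mul_one, Units.neg_smul, smul_neg, neg_neg, add_right_comm]

theorem commute_signedShift_signedAffine (hc : ψ c = -1) (a : A) :
    Commute (signedShift ψ c hc) (signedAffine ψ a) := by
  ext x
  simp only [mul_apply, signedShift_apply, signedAffine_apply, AddChar.map_add_eq_mul,
    addChar_units_smul, smul_add, mul_smul, add_assoc]

theorem signedAffine_mem_centralizer_signedShiftPair (hc : ψ c = -1) (a : A) :
    signedAffine ψ a ∈ Subgroup.centralizer (signedShiftPair ψ c hc) := by
  rintro _ (rfl | rfl) <;> exact commute_signedShift_signedAffine _ a

theorem add_mem_orbit_closure_signedShiftPair (hc : ψ c = -1) (x : A) :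
    x + c ∈ orbit (Subgroup.closure (signedShiftPair ψ c hc)) x := by
  obtain hx | hx := Int.units_eq_one_or (ψ x)
  · exact ⟨⟨_, Subgroup.subset_closure (Set.mem_insert _ _)⟩,
      (signedShift_apply hc x).trans (by rw [hx, one_smul])⟩
  · exact ⟨⟨_, Subgroup.subset_closure (Set.mem_insert_of_mem _ rfl)⟩,
      (signedShift_apply ((addChar_neg ψ c).trans hc) x).trans
        (by rw [hx, Units.neg_smul, one_smul, neg_neg])⟩

theorem bijOn_apply_zero_centralizer_signedShiftPair (hc : ψ c = -1)
    (hgen : AddSubgroup.zmultiples c = ⊤) :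
    Set.BijOn (fun g : Equiv.Perm A ↦ g 0)
      (Subgroup.centralizer (signedShiftPair ψ c hc)) Set.univ := by
  have : IsPretransitive (Subgroup.closure (signedShiftPair ψ c hc)) A :=
    isPretransitive_of_add_mem_orbit hgen (add_mem_orbit_closure_signedShiftPair hc)
  refine ⟨Set.mapsTo_univ _ _, injOn_apply_centralizer_of_isPretransitive 0, fun a _ ↦ ?_⟩
  refine ⟨signedAffine ψ a, signedAffine_mem_centralizer_signedShiftPair hc a, ?_⟩
  simp only [signedAffine_apply, smul_zero, add_zero]

theorem card_centralizer_inter_conj_general (hc : ψ c = -1)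
    (hgen : AddSubgroup.zmultiples c = ⊤) :
    Cardinal.mk
      ((Subgroup.centralizer {signedShift ψ c hc} : Set (Equiv.Perm A)) ∩
        {x : Equiv.Perm A | ∃ k ∈ Subgroup.centralizer {signedShift ψ c hc},
          Equiv.addRight c * k * (Equiv.addRight c)⁻¹ = x} : Set (Equiv.Perm A)) =
      Cardinal.mk A := by
  rw [centralizer_inter_conj_eq_centralizer_pair, conj_addRight_signedShift]
  exact Cardinal.mk_congr
    (((bijOn_apply_zero_centralizer_signedShiftPair hc hgen).equiv _).trans (Equiv.Set.univ A))

end SignedShift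

section Fin

variable (n : ℕ) [NeZero (2 * n)]

/-- The parity character `x ↦ (-1) ^ x` of the cyclic group `Fin (2 * n)`. -/
def finParity : AddChar (Fin (2 * n)) ℤˣ where
  toFun x := (-1) ^ x.val
  map_zero_eq_one' := by rw [Fin.val_zero, pow_zero]
  map_add_eq_mul' x y := by
    have hperiod : (-1 : ℤˣ) ^ (2 * n) = 1 := (even_two_mul n).neg_one_pow
    rw [Fin.val_add, ← pow_eq_pow_mod _ hperiod, pow_add]

theorem finParity_apply (x : Fin (2 * n)) : finParity n x = (-1) ^ x.val :=
  rfl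

theorem fin_two_mul_val_one : (1 : Fin (2 * n)).val = 1 := by
  have := NeZero.ne (2 * n)
  rw [Fin.val_one', Nat.mod_eq_of_lt (by omega)]

theorem finParity_one : finParity n 1 = -1 := by
  rw [finParity_apply, fin_two_mul_val_one, pow_one]

theorem fin_zmultiples_one (m : ℕ) [NeZero m] : AddSubgroup.zmultiples (1 : Fin m) = ⊤ := by
  refine AddSubgroup.eq_top_iff' _ |>.2 fun x ↦ AddSubgroup.mem_zmultiples_iff.2 ⟨x.val, ?_⟩
  open Fin.CommRing in rw [natCast_zsmul, nsmul_one, Fin.cast_val_eq_self]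

theorem finRotate_eq_addRight_one (m : ℕ) [NeZero m] : finRotate m = Equiv.addRight 1 :=
  Equiv.ext fun x ↦ finRotate_apply x

theorem rho_eq_signedShift : rho n = signedShift (finParity n) 1 (finParity_one n) := by
  ext x
  rw [signedShift_apply, finParity_apply]
  obtain heven | hodd := Nat.even_or_odd x.val
  · have hrho : (rho n x).val = x.val + 1 := if_pos (Nat.even_iff.1 heven)
    have hlt : x.val + 1 < 2 * n := hrho ▸ (rho n x).isLt
    rw [heven.neg_one_pow, one_smul, hrho, Fin.val_add, fin_two_mul_val_one, Nat.mod_eq_of_lt hlt]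
  · have hrho : (rho n x).val = x.val - 1 := if_neg (Nat.odd_iff.1 hodd ▸ one_ne_zero)
    have hx : x ≠ 0 := fun h ↦ hodd.pos.ne' (Fin.val_eq_zero_iff.2 h)
    rw [hodd.neg_one_pow, Units.neg_smul, one_smul, ← sub_eq_add_neg, hrho,
      Fin.val_sub_one_of_ne_zero hx]

end Fin

/-- The intersection of the centralizer C_ρ with its conjugate β·C_ρ·β⁻¹ by the
2n-cycle β has exactly 2n elements (it is the dihedral group of order 2n). -/
theorem card_centralizer_inter_conj (n : ℕ) (hn : 1 ≤ n) :
    Nat.card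
      ((Subgroup.centralizer {rho n} : Set (Equiv.Perm (Fin (2 * n)))) ∩
        {x : Equiv.Perm (Fin (2 * n)) |
          ∃ k ∈ Subgroup.centralizer {rho n},
            finRotate (2 * n) * k * (finRotate (2 * n))⁻¹ = x} : Set (Equiv.Perm (Fin (2 * n))))
      = 2 * n := by
  have : NeZero (2 * n) := ⟨by omega⟩
  rw [rho_eq_signedShift, finRotate_eq_addRight_one]
  exact (congrArg Cardinal.toNat (card_centralizer_inter_conj_general (finParity_one n)
    (fin_zmultiples_one (2 * n)))).trans (Nat.card_fin (2 * n))
end
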